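/- arXiv:math/0702664 — 2 statements merged into one kernel-verified Lean document; each statement's English description precedes it below -/
import Mathlib

section
/- Define Ω_{0,1}(X,Y)(f) = (X′Y″ − X″Y′)f. Then Ω_{0,1} equals the cup product [[C_{1,1}, C_{0,1}]] (with C_{1,1} valued in D_{1,1} and C_{0,1} valued in D_{0,1}); it is a 2-cocycle on Vect(1) with values in D_{0,1}; and there exist no α₀, α₁, α₂ ∈ ℝ such that Ω_{0,1} = ∂b, where b(X)(f) = α₀X″f + α₁X′f′ + α₂Xf″. -/
noncomputable section

/-- Polynomials over ℝ, identified with polynomial vector fields / densities on the line. -/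
abbrev P : Type := Polynomial ℝ

/-- Derivative d/dx. -/
def D : P → P := fun f => Polynomial.derivative f

/-- Iterated derivative: `Dk k f = f^(k)`. -/
def Dk (k : ℕ) : P → P := D^[k]

/-- Lie bracket on Vect(1): [X,Y] = XY' - X'Y. -/
def br (X Y : P) : P := X * D Y - D X * Y

/-- Action of the vector field X on λ-densities: `L_X^λ f = X f' + λ X' f`. -/
def Lw (l : ℝ) (X f : P) : P := X * D f + Polynomial.C l * D X * f

/-- Action on operators from F_ν to F_μ: `L_X^{ν,μ}(A) = L_X^μ ∘ A - A ∘ L_X^ν`. -/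
def LD (nu mu : ℝ) (X : P) (A : P → P) (f : P) : P := Lw mu X (A f) - A (Lw nu X f)

/-- 1-cocycle condition with values in D_{ν,μ}. -/
def IsCocycle1 (nu mu : ℝ) (c : P → P → P) : Prop :=
  ∀ X Y f, c (br X Y) f = LD nu mu X (c Y) f - LD nu mu Y (c X) f

/-- 2-cocycle condition with values in D_{ν,μ}. -/
def IsCocycle2 (nu mu : ℝ) (o : P → P → P → P) : Prop :=
  ∀ X Y Z f,
    LD nu mu X (o Y Z) f - LD nu mu Y (o X Z) f + LD nu mu Z (o X Y) f
      - o (br X Y) Z f + o (br X Z) Y f - o (br Y Z) X f = 0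

/-- Cup product of 1-cochains: `[[C₁,C₂]](X,Y) = C₁(X)∘C₂(Y) - C₁(Y)∘C₂(X)`. -/
def cup (c₁ c₂ : P → P → P) (X Y f : P) : P := c₁ X (c₂ Y f) - c₁ Y (c₂ X f)

/-- Coboundary of a 1-cochain b with values in D_{ν,μ}. -/
def cob (nu mu : ℝ) (b : P → P → P) (X Y f : P) : P :=
  LD nu mu X (b Y) f - LD nu mu Y (b X) f - b (br X Y) f


/-- The 2-cocycle `Ω_{0,1}`. -/
def Om01 (X Y f : P) : P := (D X * Dk 2 Y - Dk 2 X * D Y) * f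

/-!
Each `L_X` is a derivation with respect to composition of operators, so the cup product of two
1-cocycles is a 2-cocycle; `X′` and `X″` are 1-cocycles with values in `F_0` and `F_1`, and
multiplication embeds `F_{μ-λ}` into `D_{λ,μ}`.

For the nontriviality, let `b` be any 1-cochain with values in linear operators. Take the fields
`x` and `x²` and the invariant function `1 ∈ F_0`, and evaluate at the common zero `0`: there
`L_X^1 g` is `X′(0) g(0)`, and `[x, x²] = x²`, so the two surviving terms of `∂b(x, x²)(1)(0)`
cancel, while `Ω_{0,1}(x, x²)(1)` is the constant `2`.
-/

lemma D_mul (f g : P) : D (f * g) = D f * g + f * D g :=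
  Polynomial.derivative_mul

lemma D_sub (f g : P) : D (f - g) = D f - D g :=
  Polynomial.derivative_sub

lemma Dk_two (f : P) : Dk 2 f = D (D f) :=
  rfl

lemma D_br (X Y : P) : D (br X Y) = X * D (D Y) - D (D X) * Y := by
  simp only [br, D_sub, D_mul]
  ring

lemma Lw_sub (l : ℝ) (X f g : P) : Lw l X (f - g) = Lw l X f - Lw l X g := by
  simp only [Lw, D_sub]
  ring

lemma Lw_zero_one (X : P) : Lw 0 X 1 = 0 := by
  simp [Lw, D]

lemma eval_Lw_of_eval_eq_zero {X : P} {p : ℝ} (hX : X.eval p = 0) (l : ℝ) (f : P) :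
    (Lw l X f).eval p = l * (D X).eval p * f.eval p := by
  simp [Lw, hX]

lemma LD_comp {A : P → P} (hA : ∀ f g, A (f - g) = A f - A g) (l m n : ℝ) (X : P) (B : P → P)
    (f : P) : LD l n X (A ∘ B) f = LD m n X A (B f) + A (LD l m X B f) := by
  simp only [LD, hA, Function.comp_apply]
  ring

lemma LD_sub (l m : ℝ) (X : P) (A B : P → P) (f : P) :
    LD l m X (A - B) f = LD l m X A f - LD l m X B f := by
  simp only [LD, Pi.sub_apply, Lw_sub]
  ring

lemma LD_mul_left (l m : ℝ) (X a f : P) :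
    LD l m X (fun g => a * g) f = Lw (m - l) X a * f := by
  simp only [LD, Lw, D_mul, Polynomial.C_sub]
  ring

lemma LD_cup {c₁ : P → P → P} (hc₁ : ∀ X f g, c₁ X (f - g) = c₁ X f - c₁ X g)
    (c₂ : P → P → P) (l m n : ℝ) (X Y Z f : P) :
    LD l n X (cup c₁ c₂ Y Z) f =
      LD m n X (c₁ Y) (c₂ Z f) + c₁ Y (LD l m X (c₂ Z) f)
        - (LD m n X (c₁ Z) (c₂ Y f) + c₁ Z (LD l m X (c₂ Y) f)) := by
  rw [← LD_comp (hc₁ Y), ← LD_comp (hc₁ Z), ← LD_sub]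
  rfl

theorem IsCocycle1.isCocycle2_cup {l m n : ℝ} {c₁ c₂ : P → P → P} (h₁ : IsCocycle1 m n c₁)
    (h₂ : IsCocycle1 l m c₂) (hc₁ : ∀ X f g, c₁ X (f - g) = c₁ X f - c₁ X g) :
    IsCocycle2 l n (cup c₁ c₂) := by
  intro X Y Z f
  have cup_br (U V W : P) : cup c₁ c₂ (br U V) W f =
      LD m n U (c₁ V) (c₂ W f) - LD m n V (c₁ U) (c₂ W f)
        - (c₁ W (LD l m U (c₂ V) f) - c₁ W (LD l m V (c₂ U) f)) := by
    rw [cup, h₁, h₂, hc₁]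
  rw [LD_cup hc₁ c₂ l m n, LD_cup hc₁ c₂ l m n, LD_cup hc₁ c₂ l m n, cup_br, cup_br, cup_br]
  ring

lemma isCocycle1_mul_left {l m : ℝ} {c : P → P}
    (hc : ∀ X Y, c (br X Y) = Lw (m - l) X (c Y) - Lw (m - l) Y (c X)) :
    IsCocycle1 l m fun X f => c X * f := by
  intro X Y f
  simp only [LD_mul_left, hc, sub_mul]

lemma isCocycle1_D_mul (l : ℝ) : IsCocycle1 l l fun X f => D X * f := by
  refine isCocycle1_mul_left fun X Y => ?_
  simp only [D_br, Lw, sub_self, Polynomial.C_0]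
  ring

lemma isCocycle1_Dk_two_mul (l : ℝ) : IsCocycle1 l (l + 1) fun X f => Dk 2 X * f := by
  refine isCocycle1_mul_left fun X Y => ?_
  simp only [Dk_two, D_br, D_sub, D_mul, Lw, add_sub_cancel_left, Polynomial.C_1]
  ring

lemma Om01_eq_cup : Om01 = cup (fun X f => D X * f) (fun X f => Dk 2 X * f) := by
  funext X Y f
  simp only [Om01, cup]
  ring

theorem isCocycle2_Om01 (l : ℝ) : IsCocycle2 l (l + 1) Om01 := by
  rw [Om01_eq_cup]
  exact (isCocycle1_D_mul (l + 1)).isCocycle2_cup (isCocycle1_Dk_two_mul l)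
    fun X => mul_sub (D X)

lemma br_X_X_sq : br Polynomial.X (Polynomial.X ^ 2) = Polynomial.X ^ 2 := by
  simp only [br, D, Polynomial.derivative_X, Polynomial.derivative_X_sq, Polynomial.C_ofNat]
  ring

lemma Om01_X_X_sq_one : Om01 Polynomial.X (Polynomial.X ^ 2) 1 = 2 := by
  simp [Om01, Dk_two, D, Polynomial.C_ofNat, one_add_one_eq_two]

lemma eval_zero_cob_X_X_sq_one {b : P → P → P} (hb : ∀ X, b X 0 = 0) (m : ℝ) :
    (cob 0 m b Polynomial.X (Polynomial.X ^ 2) 1).eval 0 =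
      (m - 1) * (b (Polynomial.X ^ 2) 1).eval 0 := by
  have hX (g : P) : (Lw m Polynomial.X g).eval 0 = m * g.eval 0 := by
    simp [eval_Lw_of_eval_eq_zero, D]
  have hX_sq (g : P) : (Lw m (Polynomial.X ^ 2) g).eval 0 = 0 := by
    simp [eval_Lw_of_eval_eq_zero, D]
  simp only [cob, LD, Lw_zero_one, hb, sub_zero, br_X_X_sq, Polynomial.eval_sub, hX, hX_sq]
  ring

theorem Om01_ne_cob {b : P → P → P} (hb : ∀ X, b X 0 = 0) : Om01 ≠ cob 0 1 b := by
  intro h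
  have hzero : (Om01 Polynomial.X (Polynomial.X ^ 2) 1).eval 0 = 0 := by
    rw [h, eval_zero_cob_X_X_sq_one hb, sub_self, zero_mul]
  simp [Om01_X_X_sq_one] at hzero

theorem Om01_nontrivial_two_cocycle_general :
    Om01 = cup (fun X f => D X * f) (fun X f => Dk 2 X * f) ∧
    (∀ l : ℝ, IsCocycle2 l (l + 1) Om01) ∧
    ∀ b : P → P → P, (∀ X, b X 0 = 0) → Om01 ≠ cob 0 1 b :=
  ⟨Om01_eq_cup, isCocycle2_Om01, fun _ => Om01_ne_cob⟩

/-- `Ω_{0,1}` is the cup product `[[C_{1,1},C_{0,1}]]`, it is a 2-cocycle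
with values in `D_{0,1}`, and it is not the coboundary of any differential 1-cochain
of the form `b(X)(f) = α₀X″f + α₁X′f′ + α₂Xf″`. -/
theorem Om01_nontrivial_two_cocycle :
    (∀ X Y f : P, Om01 X Y f =
      cup (fun X f => D X * f) (fun X f => Dk 2 X * f) X Y f) ∧
    IsCocycle2 0 1 Om01 ∧
    ¬ ∃ a0 a1 a2 : ℝ, ∀ X Y f : P, Om01 X Y f =
      cob 0 1 (fun X f => Polynomial.C a0 * Dk 2 X * f
        + Polynomial.C a1 * D X * D f + Polynomial.C a2 * X * Dk 2 f) X Y f := by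
  obtain ⟨hcup, hcocycle, hne⟩ := Om01_nontrivial_two_cocycle_general
  exact ⟨fun X Y f => by rw [hcup], by simpa using hcocycle 0, fun ⟨_, _, _, h⟩ =>
    hne _ (by simp [D, Dk_two]) (funext fun X => funext fun Y => funext (h X Y))⟩
end
end

section
/- Let a = −(5±√19)/2 with corresponding constants α = −(22±5√19)/4, β = (31±7√19)/2, γ = (25±7√19)/2 (same choice of sign throughout). Define Ω_{a,a+6}(X,Y)(f) = (X^(5)Y″ + X^(4)Y‴)f′ + 3X^(4)Y″f″ + 2X‴Y″f‴ − (X↔Y) and Ω̃_{a,a+6}(X,Y)(f) = αX^(7)Y′f + βX′Y^(6)f′ + γX′Y^(5)f″ + 5X′Y^(4)f‴ + 5X‴Y′f^(4) + 2X″Y′f^(5) − (X↔Y). Then Ω_{a,a+6} = −[[C_{a+3,a+6}, C_{a,a+3}]] (both factors of the form C(X)(f) = X‴f′ + X″f″, valued in D_{a+3,a+6} and D_{a,a+3}), Ω̃_{a,a+6} = −[[C_{a+6,a+6}, C_{a,a+6}]] (with C_{a+6,a+6}(X)(f) = X′f and C_{a,a+6}(X)(f) = αX^(7)f − βX^(6)f′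 − γX^(5)f″ − 5X^(4)f‴ + 5X‴f^(4) + 2X″f^(5)), and both Ω_{a,a+6} and Ω̃_{a,a+6} are 2-cocycles on Vect(1) with values in D_{a,a+6}. -/
/-!
The negated cup product of two 1-cocycles is a 2-cocycle, so it suffices to recognise `Ω_{a,a+6}`
and `Ω̃_{a,a+6}` as such products and to check that their factors are 1-cocycles. A 1-cochain of
bidifferential operators with constant coefficients is encoded by its symbol `p(ξ, η)`, with `ξ` for
the derivatives of the vector field and `η` for those of the density. As the Leibniz rule reads
`d/dx ↦ ξ₁ + ⋯ + ξₙ` on symbols, the 1-cocycle condition becomes a functional equation for `p`.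
For `C_{λ,λ}` and `C_{λ,λ+3}` it holds for every `λ`. For `C_{λ,λ+6}`, whose constants are affine
functions of `λ`, the two sides differ by a multiple of `2λ² + 10λ + 3`, whose roots are
`-(5 ± √19)/2`.
-/

noncomputable section

/-- Half of the 2-cocycle `Ω_{a,a+6}`. -/
def term15a (X Y f : P) : P :=
  (Dk 5 X * Dk 2 Y + Dk 4 X * Dk 3 Y) * D f + 3 * Dk 4 X * Dk 2 Y * Dk 2 f
    + 2 * Dk 3 X * Dk 2 Y * Dk 3 f

/-- Half of the 2-cocycle `Ω̃_{a,a+6}`. -/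
def term15b (al be ga : ℝ) (X Y f : P) : P :=
  Polynomial.C al * Dk 7 X * D Y * f + Polynomial.C be * D X * Dk 6 Y * D f
    + Polynomial.C ga * D X * Dk 5 Y * Dk 2 f + 5 * D X * Dk 4 Y * Dk 3 f
    + 5 * Dk 3 X * D Y * Dk 4 f + 2 * Dk 2 X * D Y * Dk 5 f

open MvPolynomial

theorem Dk_zero (f : P) : Dk 0 f = f := rfl

theorem Dk_succ (k : ℕ) (f : P) : Dk (k + 1) f = D (Dk k f) :=
  Function.iterate_succ_apply' D k f

/-- The multidifferential operator with constant coefficients and symbol `q`, applied to the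
functions `F i`: the monomial `∏ i, ξ i ^ m i` acts as the product of the derivatives
`(F i)^(m i)`. -/
def multidiff {ι : Type*} [Fintype ι] (F : ι → P) : MvPolynomial ι ℝ →ₗ[ℝ] P :=
  (basisMonomials ι ℝ).constr ℝ fun m => ∏ i, Dk (m i) (F i)

section Multidiff

variable {ι κ : Type*} [Fintype ι] [Fintype κ]

theorem multidiff_monomial (F : ι → P) (m : ι →₀ ℕ) (c : ℝ) :
    multidiff F (monomial m c) = c • ∏ i, Dk (m i) (F i) := by
  have monomial_eq : monomial m c = c • basisMonomials ι ℝ m := by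
    simp only [coe_basisMonomials, smul_monomial, smul_eq_mul, mul_one]
  rw [monomial_eq, map_smul, multidiff, Module.Basis.constr_basis]

theorem multidiff_rename (e : ι ≃ κ) (F : κ → P) (q : MvPolynomial ι ℝ) :
    multidiff F (rename e q) = multidiff (F ∘ e) q := by
  induction q using MvPolynomial.induction_on' with
  | add p q hp hq => simp only [map_add, hp, hq]
  | monomial m c =>
    rw [rename_monomial, multidiff_monomial, multidiff_monomial, ← e.prod_comp]
    simp only [Finsupp.mapDomain_apply e.injective, Function.comp_apply]

theorem D_multidiff (F : ι → P) (q : MvPolynomial ι ℝ) :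
    D (multidiff F q) = multidiff F ((∑ i, X i) * q) := by
  classical
  induction q using MvPolynomial.induction_on' with
  | add p q hp hq => simp only [map_add, mul_add, ← hp, ← hq, D]
  | monomial m c =>
    have multidiff_X_mul (i : ι) : multidiff F (X i * monomial m c) =
        c • ((∏ j ∈ Finset.univ.erase i, Dk (m j) (F j)) * D (Dk (m i) (F i))) := by
      rw [X, monomial_mul, one_mul, multidiff_monomial,
        ← Finset.prod_erase_mul _ _ (Finset.mem_univ i), Finsupp.add_apply,
        Finsupp.single_eq_same, add_comm 1, Dk_succ]
      congr 2
      refine Finset.prod_congr rfl fun j hj => ?_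
      rw [Finsupp.add_apply, Finsupp.single_eq_of_ne (Finset.ne_of_mem_erase hj), zero_add]
    simp only [Finset.sum_mul, map_sum, multidiff_X_mul, multidiff_monomial]
    rw [D, Polynomial.derivative_smul, Polynomial.derivative_prod_finset, Finset.smul_sum]
    rfl

theorem Dk_multidiff (k : ℕ) (F : ι → P) (q : MvPolynomial ι ℝ) :
    Dk k (multidiff F q) = multidiff F ((∑ i, X i) ^ k * q) := by
  induction k with
  | zero => rw [pow_zero, one_mul, Dk_zero]
  | succ k ih => rw [Dk_succ, ih, D_multidiff, pow_succ', mul_assoc]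

theorem multidiff_vecCons {n : ℕ} (g : P) (F : Fin n → P) (k : ℕ)
    (q : MvPolynomial (Fin n) ℝ) :
    multidiff (Matrix.vecCons g F) (X 0 ^ k * rename Fin.succ q) = Dk k g * multidiff F q := by
  induction q using MvPolynomial.induction_on' with
  | add p q hp hq => simp only [map_add, mul_add, hp, hq]
  | monomial m c =>
    have zero_notMem : (0 : Fin (n + 1)) ∉ Set.range Fin.succ := by simp
    rw [X_pow_eq_monomial, rename_monomial, monomial_mul, one_mul, multidiff_monomial,
      multidiff_monomial, Fin.prod_univ_succ, mul_smul_comm]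
    simp only [Finsupp.add_apply, Finsupp.single_eq_same,
      Finsupp.mapDomain_of_notMem_range _ _ zero_notMem, add_zero, Matrix.cons_val_zero,
      Matrix.cons_val_succ,
      Finsupp.single_eq_of_ne (Fin.succ_ne_zero _), zero_add,
      Finsupp.mapDomain_apply (Fin.succ_injective n)]

theorem multidiff_pair (f g : P) (i j : ℕ) :
    multidiff ![f, g] (X 0 ^ i * X 1 ^ j) = Dk i f * Dk j g := by
  rw [X_pow_eq_monomial, X_pow_eq_monomial, monomial_mul, multidiff_monomial]
  simp [Fin.prod_univ_two]

theorem multidiff_comp_vecCons {n : ℕ} (g : P) (F : Fin n → P) (r : MvPolynomial (Fin n) ℝ)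
    (p : MvPolynomial (Fin 2) ℝ) :
    multidiff ![g, multidiff F r] p =
      multidiff (Matrix.vecCons g F)
        (bind₁ ![X 0, ∑ i : Fin n, X i.succ] p * rename Fin.succ r) := by
  induction p using MvPolynomial.induction_on' with
  | add p q hp hq => simp only [map_add, add_mul, hp, hq]
  | monomial m c =>
    have symbol_eq : bind₁ ![X 0, ∑ i : Fin n, X i.succ] (monomial m c) * rename Fin.succ r =
        c • (X 0 ^ m 0 * rename Fin.succ ((∑ i, X i) ^ m 1 * r)) := by
      rw [← aeval_eq_bind₁, aeval_monomial, Finsupp.prod_fintype _ _ fun _ => pow_zero _]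
      simp [Fin.prod_univ_two, smul_eq_C_mul, algebraMap_eq, mul_assoc]
    rw [symbol_eq, map_smul, multidiff_vecCons, ← Dk_multidiff, multidiff_monomial,
      Fin.prod_univ_two]
    rfl

theorem multidiff_swap (f g h : P) (q : MvPolynomial (Fin 3) ℝ) :
    multidiff ![g, f, h] q = multidiff ![f, g, h] (rename (Equiv.swap 0 1) q) := by
  rw [multidiff_rename]
  congr 2
  ext1 i; fin_cases i <;> rfl

theorem multidiff_comp_right (f g h : P) (r p : MvPolynomial (Fin 2) ℝ) :
    multidiff ![f, multidiff ![g, h] r] p =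
      multidiff ![f, g, h] (bind₁ ![X 0, X 1 + X 2] p * bind₁ ![X 1, X 2] r) := by
  have rename_eq : rename Fin.succ r = bind₁ ![X 1, X 2] r := by
    rw [← aeval_X_left_apply (rename Fin.succ r), aeval_rename, aeval_eq_bind₁]
    congr 2
    ext1 i; fin_cases i <;> rfl
  rw [multidiff_comp_vecCons, Fin.sum_univ_two, rename_eq]
  rfl

theorem multidiff_comp_left (f g h : P) (r p : MvPolynomial (Fin 2) ℝ) :
    multidiff ![multidiff ![f, g] r, h] p =
      multidiff ![f, g, h] (bind₁ ![X 0 + X 1, X 2] p * bind₁ ![X 0, X 1] r) := by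
  have swap_eq : ![multidiff ![f, g] r, h] = ![h, multidiff ![f, g] r] ∘ Equiv.swap 0 1 := by
    ext1 i; fin_cases i <;> rfl
  have rotate_eq : ![h, f, g] = ![f, g, h] ∘ (finRotate 3).symm := by
    ext1 i; fin_cases i <;> rfl
  rw [swap_eq, ← multidiff_rename, multidiff_comp_right, rotate_eq, ← multidiff_rename, map_mul,
    rename_bind₁, rename_bind₁, bind₁_rename]
  congr 4 <;> ext1 i <;> fin_cases i
  · exact (map_add _ _ _).trans (congrArg₂ (· + ·) (rename_X _ _) (rename_X _ _))
  all_goals exact rename_X _ _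

end Multidiff

theorem eval_bind₁_pair {σ : Type*} (ξ : σ → ℝ) (a b : MvPolynomial σ ℝ)
    (p : MvPolynomial (Fin 2) ℝ) :
    eval ξ (bind₁ ![a, b] p) = eval ![eval ξ a, eval ξ b] p := by
  refine (eval₂Hom_bind₁ (RingHom.id ℝ) ξ ![a, b] p).trans ?_
  congr 2
  ext1 i; fin_cases i <;> rfl

theorem multidiff_X_zero (f g : P) : multidiff ![f, g] (X 0) = D f * g := by
  simpa only [pow_one, pow_zero, mul_one, Dk_succ, Dk_zero] using multidiff_pair f g 1 0

theorem multidiff_X_one (f g : P) : multidiff ![f, g] (X 1) = f * D g := by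
  simpa only [pow_one, pow_zero, one_mul, Dk_succ, Dk_zero] using multidiff_pair f g 0 1

theorem br_eq_multidiff (V W : P) : br V W = multidiff ![V, W] (X 1 - X 0) := by
  rw [br, map_sub, multidiff_X_zero, multidiff_X_one]

theorem Lw_eq_multidiff (l : ℝ) (V f : P) :
    Lw l V f = multidiff ![V, f] (X 1 + l • X 0) := by
  rw [Lw, map_add, map_smul, multidiff_X_zero, multidiff_X_one, Polynomial.smul_eq_C_mul,
    mul_assoc]

/-- The 1-cochain of bidifferential operators with constant coefficients and symbol `p`, in which
`X 0` stands for the derivatives of the vector field and `X 1` for those of the density. -/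
def symbolCochain (p : MvPolynomial (Fin 2) ℝ) (V f : P) : P := multidiff ![V, f] p

theorem symbolCochain_br (p : MvPolynomial (Fin 2) ℝ) (V W f : P) :
    symbolCochain p (br V W) f =
      multidiff ![V, W, f] ((X 1 - X 0) * bind₁ ![X 0 + X 1, X 2] p) := by
  rw [symbolCochain, br_eq_multidiff, multidiff_comp_left, mul_comm]
  simp

theorem Lw_symbolCochain (l : ℝ) (p : MvPolynomial (Fin 2) ℝ) (V W f : P) :
    Lw l V (symbolCochain p W f) =
      multidiff ![V, W, f] ((X 1 + X 2 + l • X 0) * bind₁ ![X 1, X 2] p) := by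
  rw [Lw_eq_multidiff, symbolCochain, multidiff_comp_right]
  simp

theorem symbolCochain_Lw (l : ℝ) (p : MvPolynomial (Fin 2) ℝ) (V W f : P) :
    symbolCochain p W (Lw l V f) =
      multidiff ![V, W, f] ((X 2 + l • X 0) * bind₁ ![X 1, X 0 + X 2] p) := by
  rw [symbolCochain, Lw_eq_multidiff, multidiff_comp_right, multidiff_swap]
  congr 1
  refine MvPolynomial.funext fun ξ => ?_
  simp [eval_rename, eval_bind₁_pair, mul_comm, smul_eval, Equiv.swap_apply_of_ne_of_ne]

-- `h` is the cocycle identity tested on the exponentials `V = e^{ux}`, `W = e^{vx}`, `f = e^{wx}`.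
theorem isCocycle1_symbolCochain {nu mu : ℝ} {p : MvPolynomial (Fin 2) ℝ}
    (h : ∀ u v w : ℝ, (v - u) * eval ![u + v, w] p =
      (v + w + mu * u) * eval ![v, w] p - (w + nu * u) * eval ![v, u + w] p -
      ((u + w + mu * v) * eval ![u, w] p - (w + nu * v) * eval ![u, v + w] p)) :
    IsCocycle1 nu mu (symbolCochain p) := by
  intro V W f
  simp only [LD, symbolCochain_br, Lw_symbolCochain, symbolCochain_Lw, multidiff_swap V W,
    ← map_sub]
  congr 1
  refine MvPolynomial.funext fun ξ => ?_
  simpa [eval_rename, eval_bind₁_pair, smul_eval, Equiv.swap_apply_of_ne_of_ne]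
    using h (ξ 0) (ξ 1) (ξ 2)

/-- The 1-cocycle `C_{λ,λ}`, the same map for every weight `λ`. -/
def divergenceCochain (V f : P) : P := D V * f

/-- The 1-cocycle `C_{λ,λ+3}`, the same map for every weight `λ`. -/
def cochainThree (V f : P) : P := Dk 3 V * D f + Dk 2 V * Dk 2 f

/-- The 1-cochain `C_{a,a+6}`, with `al`, `be`, `ga` for the constants `α`, `β`, `γ`. -/
def cochainSix (al be ga : ℝ) (V f : P) : P :=
  Polynomial.C al * Dk 7 V * f - Polynomial.C be * Dk 6 V * D f - Polynomial.C ga * Dk 5 V * Dk 2 f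
    - 5 * Dk 4 V * Dk 3 f + 5 * Dk 3 V * Dk 4 f + 2 * Dk 2 V * Dk 5 f

theorem divergenceCochain_eq_symbolCochain : divergenceCochain = symbolCochain (X 0) := by
  funext V f
  rw [divergenceCochain, symbolCochain, multidiff_X_zero]

theorem cochainThree_eq_symbolCochain :
    cochainThree = symbolCochain (X 0 ^ 3 * X 1 ^ 1 + X 0 ^ 2 * X 1 ^ 2) := by
  funext V f
  rw [cochainThree, symbolCochain, map_add, multidiff_pair, multidiff_pair]
  rfl

theorem cochainSix_eq_symbolCochain (al be ga : ℝ) :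
    cochainSix al be ga = symbolCochain
      (al • (X 0 ^ 7 * X 1 ^ 0) - be • (X 0 ^ 6 * X 1 ^ 1) - ga • (X 0 ^ 5 * X 1 ^ 2)
        - (5 : ℝ) • (X 0 ^ 4 * X 1 ^ 3) + (5 : ℝ) • (X 0 ^ 3 * X 1 ^ 4)
        + (2 : ℝ) • (X 0 ^ 2 * X 1 ^ 5)) := by
  funext V f
  simp only [cochainSix, symbolCochain, map_add, map_sub, map_smul, multidiff_pair,
    Polynomial.smul_eq_C_mul, Polynomial.C_ofNat, ← mul_assoc]
  rfl

theorem isCocycle1_divergenceCochain (l : ℝ) : IsCocycle1 l l divergenceCochain := by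
  rw [divergenceCochain_eq_symbolCochain]
  refine isCocycle1_symbolCochain fun u v w => ?_
  simp only [eval_X, Matrix.cons_val_zero]
  ring

theorem isCocycle1_cochainThree (l : ℝ) : IsCocycle1 l (l + 3) cochainThree := by
  rw [cochainThree_eq_symbolCochain]
  refine isCocycle1_symbolCochain fun u v w => ?_
  simp only [map_add, map_mul, map_pow, eval_X, Matrix.cons_val_zero, Matrix.cons_val_one]
  ring

theorem isCocycle1_cochainSix {l al be ga : ℝ} (hal : al = (10 * l + 3) / 4)
    (hbe : be = -(7 * l + 2)) (hga : ga = -(7 * l + 5)) (hl : 2 * l ^ 2 + 10 * l + 3 = 0) :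
    IsCocycle1 l (l + 6) (cochainSix al be ga) := by
  subst hal hbe hga
  rw [cochainSix_eq_symbolCochain]
  refine isCocycle1_symbolCochain fun u v w => ?_
  simp only [map_add, map_sub, map_mul, map_pow, smul_eval, eval_X, Matrix.cons_val_zero,
    Matrix.cons_val_one]
  linear_combination (-7 / 2 * u ^ 2 * v ^ 2 * (u ^ 3 - v ^ 3) * (u + v + 2 * w)) * hl

theorem IsCocycle1.neg_cup {l m n : ℝ} {c₁ c₂ : P → P → P} (h₁ : IsCocycle1 m n c₁)
    (h₂ : IsCocycle1 l m c₂) (hsub : ∀ V f g, c₁ V (f - g) = c₁ V f - c₁ V g) :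
    IsCocycle2 l n fun V W f => -cup c₁ c₂ V W f := by
  intro V W U f
  have Lw_sub (V f g : P) : Lw n V (f - g) = Lw n V f - Lw n V g := by
    simp only [Lw, D, map_sub]; ring
  have Lw_neg (V f : P) : Lw n V (-f) = -Lw n V f := by
    simp only [Lw, D, map_neg]; ring
  simp only [IsCocycle1, LD] at h₁ h₂
  -- With `c₁`, `c₂` evaluated on brackets by their cocycle identities, all terms cancel in pairs.
  simp only [LD, cup, Lw_sub, Lw_neg, h₁, h₂, hsub]
  abel

theorem divergenceCochain_sub (V f g : P) :
    divergenceCochain V (f - g) = divergenceCochain V f - divergenceCochain V g :=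
  mul_sub _ _ _

theorem cochainThree_sub (V f g : P) :
    cochainThree V (f - g) = cochainThree V f - cochainThree V g := by
  simp only [cochainThree, Dk_succ, Dk_zero, D, map_sub]
  ring

theorem term15a_sub_swap_eq_neg_cup (V W f : P) :
    term15a V W f - term15a W V f = -cup cochainThree cochainThree V W f := by
  simp only [term15a, cup, cochainThree, Dk_succ, Dk_zero, D, Polynomial.derivative_mul, map_add]
  ring

theorem term15b_sub_swap_eq_neg_cup (al be ga : ℝ) (V W f : P) :
    term15b al be ga V W f - term15b al be ga W V f =
      -cup divergenceCochain (cochainSix al be ga) V W f := by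
  simp only [term15b, cup, divergenceCochain, cochainSix]
  ring

theorem isCocycle2_term15a (l : ℝ) :
    IsCocycle2 l (l + 6) fun V W f => term15a V W f - term15a W V f := by
  have weight_eq : l + 6 = l + 3 + 3 := by ring
  simp only [term15a_sub_swap_eq_neg_cup, weight_eq]
  exact (isCocycle1_cochainThree (l + 3)).neg_cup (isCocycle1_cochainThree l) cochainThree_sub

theorem isCocycle2_term15b {l al be ga : ℝ} (hal : al = (10 * l + 3) / 4)
    (hbe : be = -(7 * l + 2)) (hga : ga = -(7 * l + 5)) (hl : 2 * l ^ 2 + 10 * l + 3 = 0) :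
    IsCocycle2 l (l + 6) fun V W f => term15b al be ga V W f - term15b al be ga W V f := by
  simp only [term15b_sub_swap_eq_neg_cup]
  exact (isCocycle1_divergenceCochain (l + 6)).neg_cup
    (isCocycle1_cochainSix hal hbe hga hl) divergenceCochain_sub

/-- for `a = -(5±√19)/2`, the maps `Ω_{a,a+6} = -[[C_{a+3,a+6},C_{a,a+3}]]`
and `Ω̃_{a,a+6} = -[[C_{a+6,a+6},C_{a,a+6}]]` are 2-cocycles with values in `D_{a,a+6}`. -/
theorem Om6_two_cocycles (s : ℝ)
    (hs : s = Real.sqrt 19 ∨ s = -Real.sqrt 19) :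
    (∀ X Y f : P, term15a X Y f - term15a Y X f =
      - cup (fun X f => Dk 3 X * D f + Dk 2 X * Dk 2 f)
          (fun X f => Dk 3 X * D f + Dk 2 X * Dk 2 f) X Y f) ∧
    (∀ X Y f : P,
      term15b (-(22 + 5 * s) / 4) ((31 + 7 * s) / 2) ((25 + 7 * s) / 2) X Y f
        - term15b (-(22 + 5 * s) / 4) ((31 + 7 * s) / 2) ((25 + 7 * s) / 2) Y X f =
      - cup (fun X f => D X * f)
          (fun X f => Polynomial.C (-(22 + 5 * s) / 4) * Dk 7 X * f
            - Polynomial.C ((31 + 7 * s) / 2) * Dk 6 X * D f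
            - Polynomial.C ((25 + 7 * s) / 2) * Dk 5 X * Dk 2 f
            - 5 * Dk 4 X * Dk 3 f + 5 * Dk 3 X * Dk 4 f + 2 * Dk 2 X * Dk 5 f) X Y f) ∧
    IsCocycle2 (-(5 + s) / 2) (-(5 + s) / 2 + 6)
      (fun X Y f => term15a X Y f - term15a Y X f) ∧
    IsCocycle2 (-(5 + s) / 2) (-(5 + s) / 2 + 6)
      (fun X Y f =>
        term15b (-(22 + 5 * s) / 4) ((31 + 7 * s) / 2) ((25 + 7 * s) / 2) X Y f
          - term15b (-(22 + 5 * s) / 4) ((31 + 7 * s) / 2) ((25 + 7 * s) / 2) Y X f) := by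
  have sq_eq : s ^ 2 = 19 := by
    rcases hs with rfl | rfl <;> norm_num
  have root : 2 * (-(5 + s) / 2) ^ 2 + 10 * (-(5 + s) / 2) + 3 = 0 := by
    linear_combination sq_eq / 2
  exact ⟨term15a_sub_swap_eq_neg_cup, term15b_sub_swap_eq_neg_cup _ _ _, isCocycle2_term15a _,
    isCocycle2_term15b (by ring) (by ring) (by ring) root⟩
end
end
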